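/- Let S be a finite regular semigroup and a, b ∈ S. Then a ∼ b if and only if a ≡ b. -/

import Mathlib

namespace SgConjPaper

/-- `spow x n = x^(n+1)`: positive powers of an element of a semigroup. -/
def spow {S : Type*} [Semigroup S] (x : S) : ℕ → S
  | 0 => x
  | n + 1 => spow x n * x

/-- `a` lies in the maximal subgroup of `S` whose identity is the idempotent
`e` (i.e. `e` is a two-sided identity for `a` and `a` is invertible over `e`). -/
def InMaxSubgroup {S : Type*} [Semigroup S] (e a : S) : Prop :=
  e * a = a ∧ a * e = a ∧ ∃ b : S, e * b = b ∧ b * e = b ∧ a * b = e ∧ b * a = e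

/-- `e` is the idempotent `e_x`: the identity of the maximal subgroup
containing some positive power of `x`. -/
def IsEIdem {S : Type*} [Semigroup S] (x e : S) : Prop :=
  ∃ k : ℕ, InMaxSubgroup e (spow x k)

/-- A semigroup is group-bound if some positive power of every element lies
in a subgroup. -/
def GroupBound (S : Type*) [Semigroup S] : Prop := ∀ x : S, ∃ e : S, IsEIdem x e

/-- Primary conjugacy: `x = uv`, `y = vu` for some `u, v ∈ S¹`. -/
def PrimConj {S : Type*} [Semigroup S] (x y : S) : Prop :=
  ∃ u v : WithOne S, (x : WithOne S) = u * v ∧ (y : WithOne S) = v * u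

/-- Conjugacy `∼`: the transitive closure of primary conjugacy. -/
def SgConj {S : Type*} [Semigroup S] : S → S → Prop := Relation.TransGen PrimConj

/-- Conjugacy in the character sense `≡`: equal traces under every
finite-dimensional complex representation. -/
def CharEq {S : Type*} [Semigroup S] (x y : S) : Prop :=
  ∀ (V : Type) (_ : AddCommGroup V) (_ : Module ℂ V) (_ : FiniteDimensional ℂ V)
    (φ : S →ₙ* Module.End ℂ V),
    LinearMap.trace ℂ V (φ x) = LinearMap.trace ℂ V (φ y)

/-- A semigroup is regular if for every `a` there is `b` with `a = aba`. -/
def Regular (S : Type*) [Semigroup S] : Prop := ∀ a : S, ∃ b : S, a * b * a = a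

/-!
Traces are invariant under primary conjugacy, so only `a ≡ b → a ∼ b` needs an argument.

In a regular semigroup let `wₖ` satisfy `xᵏ wₖ xᵏ = xᵏ` for `k ≥ 1`, and put `cₖ = xᵏ⁺¹ wₖ`. Then
`x = (x w₁) x ∼ c₁`, and `cₖ ∼ cₖ₊₁` because `(xᵏ⁺¹ wₖ₊₁) cₖ = cₖ` and `cₖ (xᵏ⁺¹ wₖ₊₁) = cₖ₊₁`. When
`xᵏ` lies in a subgroup with identity `e`, taking `wₖ` to be its inverse there gives `cₖ = xe`, an
element of that subgroup. So `a` and `b` may be taken in subgroups with identities `f` and `e`.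

Let `b⁻¹` be the inverse of `b` in its subgroup. Right multiplication by `b⁻¹` commutes with left
multiplications, and decomposing into its generalized eigenspaces shows that `a ≡ b` forces
`s ↦ a s b⁻¹` and `s ↦ b s b⁻¹` to have equally many fixed points, on `S` and on the ideal
`{s | e ∉ S s S}`. As `e = b e b⁻¹` is outside the ideal, some `x` outside it satisfies
`x = a x b⁻¹`, that is, `a x = x b`. Exchanging `a` and `b` shows that `x` is `𝒥`-equivalent to `e`
and `f`, and stability of finite semigroups makes `x` invertible from `e` to `f`.
-/

section Conjugacy

variable {S : Type*} [Semigroup S] {a b c x y : S}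

lemma primConj_mul_comm (u v : S) : PrimConj (u * v) (v * u) :=
  ⟨u, v, WithOne.coe_mul u v, WithOne.coe_mul v u⟩

lemma PrimConj.symm (h : PrimConj x y) : PrimConj y x :=
  let ⟨u, v, hx, hy⟩ := h
  ⟨v, u, hy, hx⟩

lemma SgConj.symm (h : SgConj x y) : SgConj y x :=
  have : Std.Symm (PrimConj (S := S)) := ⟨fun _ _ => PrimConj.symm⟩
  Relation.TransGen.stdSymm.symm _ _ h

lemma CharEq.symm (h : CharEq a b) : CharEq b a :=
  fun V i j k φ => (h V i j k φ).symm

lemma CharEq.trans (hab : CharEq a b) (hbc : CharEq b c) : CharEq a c :=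
  fun V i j k φ => (hab V i j k φ).trans (hbc V i j k φ)

lemma PrimConj.charEq (h : PrimConj x y) : CharEq x y := by
  intro V _ _ _ φ
  obtain ⟨u, v, hx, hy⟩ := h
  rw [← WithOne.lift_coe φ x, ← WithOne.lift_coe φ y, hx, hy,
    map_mul (WithOne.lift φ), map_mul (WithOne.lift φ)]
  exact LinearMap.trace_mul_comm ℂ _ _

lemma SgConj.charEq (h : SgConj x y) : CharEq x y :=
  h.trans_induction_on PrimConj.charEq fun _ _ => CharEq.trans

end Conjugacy

section Powers

variable {S : Type*} [Semigroup S] {e x : S}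

lemma spow_succ' (x : S) (n : ℕ) : spow x (n + 1) = x * spow x n := by
  induction n with
  | zero => rfl
  | succ n ih => exact (congrArg (· * x) ih).trans (mul_assoc x (spow x n) x)

lemma spow_mul_spow (x : S) (m n : ℕ) : spow x m * spow x n = spow x (m + n + 1) := by
  induction n with
  | zero => rfl
  | succ n ih => rw [spow, ← mul_assoc, ih]; rfl

lemma exists_isIdempotentElem_spow [Finite S] (x : S) : ∃ k, IsIdempotentElem (spow x k) := by
  let : TopologicalSpace S := ⊥
  have : DiscreteTopology S := ⟨rfl⟩
  obtain ⟨_, ⟨k, rfl⟩, hk⟩ := exists_idempotent_in_compact_subsemigroup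
    (fun _ => continuous_of_discreteTopology) (Set.range (spow x)) (Set.range_nonempty _)
    (Set.toFinite _).isCompact (by
      rintro _ ⟨m, rfl⟩ _ ⟨n, rfl⟩
      exact ⟨m + n + 1, (spow_mul_spow x m n).symm⟩)
  exact ⟨k, hk⟩

lemma inMaxSubgroup_self (he : IsIdempotentElem e) : InMaxSubgroup e e :=
  ⟨he, he, e, he, he, he, he⟩

lemma InMaxSubgroup.isIdempotentElem (h : InMaxSubgroup e x) : IsIdempotentElem e := by
  obtain ⟨hex, -, y, -, -, hxy, -⟩ := h
  rw [IsIdempotentElem, ← hxy, ← mul_assoc, hxy, hex, hxy]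

lemma inMaxSubgroup_of_mul_eq {l r : S} (hex : e * x = x) (hxe : x * e = x) (hr : x * r = e)
    (hl : l * x = e) : InMaxSubgroup e x := by
  have hee : e * e = e :=
    calc e * e = l * x * e := by rw [hl]
      _ = e := by rw [mul_assoc, hxe, hl]
  have hlr : l * e = e * r := by rw [← hr, ← mul_assoc, hl, hr]
  refine ⟨hex, hxe, l * e, ?_, by rw [mul_assoc, hee], ?_, by rw [mul_assoc, hex, hl]⟩
  · rw [hlr, ← mul_assoc, hee]
  · rw [hlr, ← mul_assoc, hxe, hr]

lemma groupBound_of_finite [Finite S] : GroupBound S := fun x =>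
  let ⟨k, hk⟩ := exists_isIdempotentElem_spow x
  ⟨spow x k, k, inMaxSubgroup_self hk⟩

lemma IsEIdem.commute (h : IsEIdem x e) : Commute x e := by
  obtain ⟨k, hep, hpe, q, -, -, hpq, hqp⟩ := h
  set p := spow x k
  have hxp : x * p = p * x := (spow_succ' x k).symm
  calc x * e = e * (x * e) := by
        rw [← hpq, ← mul_assoc x, hxp, hpq, ← mul_assoc, ← mul_assoc, hep]
    _ = e * x := by
        rw [← mul_assoc, ← hqp, mul_assoc q, ← hxp, hqp, mul_assoc, mul_assoc x, hpe]

lemma IsEIdem.inMaxSubgroup_mul (h : IsEIdem x e) : InMaxSubgroup e (x * e) := by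
  have hxe : x * e = e * x := h.commute
  obtain ⟨k, hk⟩ := h
  have hee : e * e = e := hk.isIdempotentElem
  obtain ⟨hep, hpe, q, -, -, hpq, hqp⟩ := hk
  set p := spow x k
  set t := spow x (k + k)
  have hxt : x * t = p * p := by rw [← spow_succ', spow_mul_spow]
  have htx : t * x = p * p := by rw [spow_mul_spow]; rfl
  have hright : x * e * (t * (q * q)) = e :=
    calc x * e * (t * (q * q)) = e * (x * t) * q * q := by rw [hxe]; simp only [mul_assoc]
      _ = p * (p * q) * q := by rw [hxt, ← mul_assoc, hep, mul_assoc p]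
      _ = e := by rw [hpq, hpe, hpq]
  have hleft : q * q * t * (x * e) = e :=
    calc q * q * t * (x * e) = q * q * (t * x) * e := by simp only [mul_assoc]
      _ = q * (q * p * p) * e := by rw [htx]; simp only [mul_assoc]
      _ = e := by rw [hqp, hep, hqp, hee]
  refine inMaxSubgroup_of_mul_eq ?_ ?_ hright hleft
  · rw [← mul_assoc, ← hxe, mul_assoc, hee]
  · rw [mul_assoc, hee]

lemma Regular.sgConj_mul_spow_mul (hreg : Regular S) (x : S) (k : ℕ) {w : S}
    (hw : spow x k * w * spow x k = spow x k) : SgConj x (x * (spow x k * w)) := by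
  induction k generalizing w with
  | zero =>
    have h := primConj_mul_comm (x * w) x
    rw [show x * w * x = x from hw] at h
    exact .single h
  | succ k ih =>
    obtain ⟨v, hv⟩ := hreg (spow x k)
    refine (ih hv).tail ?_
    have hleft : spow x (k + 1) * w * (x * (spow x k * v)) = x * (spow x k * v) := by
      rw [← mul_assoc x, ← spow_succ', ← mul_assoc, hw]
    have hright : x * (spow x k * v) * (spow x (k + 1) * w) = x * (spow x (k + 1) * w) := by
      calc x * (spow x k * v) * (spow x k * x * w)
          = x * (spow x k * v * spow x k * x * w) := by simp only [mul_assoc]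
        _ = x * (spow x k * x * w) := by rw [hv]
    have h := primConj_mul_comm (spow x (k + 1) * w) (x * (spow x k * v))
    rwa [hleft, hright] at h

lemma Regular.sgConj_mul_of_isEIdem (hreg : Regular S) (h : IsEIdem x e) : SgConj x (x * e) := by
  obtain ⟨k, hep, -, q, -, -, hpq, -⟩ := h
  rw [← hpq]
  exact hreg.sgConj_mul_spow_mul x k (by rw [hpq, hep])

end Powers

section Stability

variable {S : Type*} [Semigroup S] {e f x : S}

/-- `e ∈ SxS`. For idempotent `e` this is the inequality `e ≤ x` in Green's `𝒥`-order, whose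
definition in general uses `S¹` in place of `S`. -/
def JLe (e x : S) : Prop := ∃ p q : S, p * x * q = e

lemma jLe_self (he : IsIdempotentElem e) : JLe e e := ⟨e, e, by rw [he.eq, he.eq]⟩

lemma JLe.trans (hfe : JLe f e) (hex : JLe e x) : JLe f x := by
  obtain ⟨p, q, rfl⟩ := hex
  obtain ⟨r, s, rfl⟩ := hfe
  exact ⟨r * p, q * s, by simp only [mul_assoc]⟩

lemma JLe.of_mul_left {s : S} (h : JLe e (s * x)) : JLe e x :=
  let ⟨p, q, hpq⟩ := h
  ⟨p * s, q, by rw [mul_assoc p, hpq]⟩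

lemma JLe.of_mul_right {s : S} (h : JLe e (x * s)) : JLe e x :=
  let ⟨p, q, hpq⟩ := h
  ⟨p, s * q, by rw [← hpq]; simp only [mul_assoc]⟩

lemma JLe.op (h : JLe e x) : JLe (MulOpposite.op e) (MulOpposite.op x) :=
  let ⟨p, q, hpq⟩ := h
  ⟨.op q, .op p, by rw [← hpq, mul_assoc p]; rfl⟩

lemma JLe.exists_mul_eq [Finite S] (h : JLe e x) (he : IsIdempotentElem e) (hex : e * x = x) :
    ∃ z, x * z = e := by
  obtain ⟨p, q, hpq⟩ := h
  have hmaps : Set.MapsTo (x * q * ·) {s | e * s = s} {s | e * s = s} := fun s _ => by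
    change e * (x * q * s) = x * q * s
    rw [← mul_assoc, ← mul_assoc, hex]
  have hinj : Set.InjOn (x * q * ·) {s | e * s = s} := fun s hs t ht hst => by
    have hst' : p * (x * q * s) = p * (x * q * t) := congrArg (p * ·) hst
    rwa [← mul_assoc, ← mul_assoc, ← mul_assoc, ← mul_assoc, hpq, hs, ht] at hst'
  obtain ⟨s, -, hs⟩ := (((Set.toFinite _).injOn_iff_bijOn_of_mapsTo hmaps).1 hinj).surjOn he
  exact ⟨q * s, (mul_assoc x q s).symm.trans hs⟩

lemma JLe.exists_mul_eq' [Finite S] (h : JLe e x) (he : IsIdempotentElem e) (hxe : x * e = x) :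
    ∃ y, y * x = e := by
  have : Finite Sᵐᵒᵖ := Finite.of_equiv S MulOpposite.opEquiv
  obtain ⟨z, hz⟩ := h.op.exists_mul_eq (congrArg MulOpposite.op he) (congrArg MulOpposite.op hxe)
  exact ⟨z.unop, congrArg MulOpposite.unop hz⟩

end Stability

section Traces

open Function

lemma trace_lmapDomain (R : Type*) [CommSemiring R] {X : Type*} [Finite X] (f : X → X) :
    LinearMap.trace R (X →₀ R) (Finsupp.lmapDomain R R f) = (fixedPoints f).ncard := by
  classical
  have := Fintype.ofFinite X
  rw [LinearMap.trace_eq_matrix_trace R Finsupp.basisSingleOne, Matrix.trace,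
    Set.ncard_eq_toFinset_card', ← Set.filter_mem_univ_eq_toFinset, ← Finset.sum_boole]
  refine Finset.sum_congr rfl fun x _ => ?_
  simp [LinearMap.toMatrix_apply, Finsupp.single_apply, mem_fixedPoints, IsFixedPt]

variable {S : Type*} [Semigroup S] {a b : S}

lemma CharEq.trace_eq (h : CharEq a b) {V : Type*} [AddCommGroup V] [Module ℂ V]
    [FiniteDimensional ℂ V] (φ : S →ₙ* Module.End ℂ V) :
    LinearMap.trace ℂ V (φ a) = LinearMap.trace ℂ V (φ b) := by
  let E : V ≃ₗ[ℂ] (Fin (Module.finrank ℂ V) → ℂ) := (Module.finBasis ℂ V).equivFun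
  let ψ : S →ₙ* Module.End ℂ (Fin (Module.finrank ℂ V) → ℂ) :=
    { toFun := fun s => E.conj (φ s)
      map_mul' := fun s t => by rw [map_mul]; exact E.conj_comp _ _ }
  have hψ : ∀ s, LinearMap.trace ℂ _ (ψ s) = LinearMap.trace ℂ V (φ s) :=
    fun s => LinearMap.trace_conj' (φ s) E
  rw [← hψ, ← hψ, h _ inferInstance inferInstance inferInstance ψ]

lemma CharEq.trace_mul_eq (h : CharEq a b) {V : Type*} [AddCommGroup V] [Module ℂ V]
    [FiniteDimensional ℂ V] (φ : S →ₙ* Module.End ℂ V) {T : Module.End ℂ V}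
    (hT : ∀ s, Commute T (φ s)) :
    LinearMap.trace ℂ V (φ a * T) = LinearMap.trace ℂ V (φ b * T) := by
  rw [← sub_eq_zero, ← map_sub, ← sub_mul]
  refine LinearMap.trace_comp_eq_zero_of_commute_of_trace_restrict_eq_zero
    ((hT a).sub_right (hT b)) (Module.End.iSup_maxGenEigenspace_eq_top T) fun μ => ?_
  let ψ : S →ₙ* Module.End ℂ (T.maxGenEigenspace μ) :=
    { toFun := fun s => (φ s).restrict (Module.End.mapsTo_maxGenEigenspace_of_comm (hT s) μ)
      map_mul' := fun s t => LinearMap.ext fun v => Subtype.ext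
        (congrArg (fun g : Module.End ℂ V => g v) (map_mul φ s t)) }
  change LinearMap.trace ℂ _ (ψ a - ψ b) = 0
  rw [map_sub, h.trace_eq ψ, sub_self]

end Traces

section Actions

open Function

variable {S : Type*} [Semigroup S] {a b e : S} {X : Type*} [SemigroupAction S X]

instance subMulActionSemigroupAction (I : SubMulAction S X) : SemigroupAction S I where
  mul_smul s t x := Subtype.ext (mul_smul s t (x : X))

instance leftMulSemigroupAction : SemigroupAction S S where
  mul_smul := mul_assoc

/-- The permutation representation of `S` on the space with basis `X`. -/
noncomputable def permRep (S X : Type*) [Semigroup S] [SemigroupAction S X] :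
    S →ₙ* Module.End ℂ (X →₀ ℂ) where
  toFun s := Finsupp.lmapDomain ℂ ℂ (s • ·)
  map_mul' s t := by
    rw [Module.End.mul_eq_comp, ← Finsupp.lmapDomain_comp]
    exact congrArg _ (funext (mul_smul s t))

/-- The ideal of those `x` with `e ∉ SxS`. -/
def idealNotJLe (e : S) : SemigroupIdeal S where
  carrier := {x | ¬ JLe e x}
  smul_mem' _ _ hx hsx := hx hsx.of_mul_left

lemma CharEq.ncard_fixedPoints_eq [Finite X] (h : CharEq a b) {r : X → X}
    (hr : ∀ (s : S) x, r (s • x) = s • r x) :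
    (fixedPoints fun x => a • r x).ncard = (fixedPoints fun x => b • r x).ncard := by
  have hmul (s : S) : permRep S X s * Finsupp.lmapDomain ℂ ℂ r =
      Finsupp.lmapDomain ℂ ℂ fun x => s • r x := (Finsupp.lmapDomain_comp ℂ ℂ r (s • ·)).symm
  have hcomm (s : S) : Commute (Finsupp.lmapDomain ℂ ℂ r) (permRep S X s) := by
    refine Eq.trans ?_ (hmul s).symm
    exact (Finsupp.lmapDomain_comp ℂ ℂ (s • ·) r).symm.trans (congrArg _ (funext (hr s)))
  have htrace := h.trace_mul_eq (permRep S X) hcomm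
  rw [hmul, hmul, trace_lmapDomain, trace_lmapDomain] at htrace
  exact_mod_cast htrace

lemma ncard_fixedPoints_restrict (I : Set X) {f : X → X} (hf : Set.MapsTo f I I) :
    (fixedPoints hf.restrict).ncard = (fixedPoints f ∩ I).ncard := by
  rw [← Set.ncard_image_of_injective _ Subtype.val_injective, Set.inter_comm,
    ← Subtype.image_preimage_coe]
  congr 2
  ext x
  exact Subtype.ext_iff

lemma CharEq.ncard_fixedPoints_sdiff_eq [Finite X] (h : CharEq a b) {r : X → X}
    (hr : ∀ (s : S) x, r (s • x) = s • r x) {I : SubMulAction S X} (hrI : Set.MapsTo r I I) :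
    ((fixedPoints fun x => a • r x) \ I).ncard = ((fixedPoints fun x => b • r x) \ I).ncard := by
  have hI : ((fixedPoints fun x => a • r x) ∩ I).ncard =
      ((fixedPoints fun x => b • r x) ∩ I).ncard := by
    have hrestrict (s : S) : Set.MapsTo (fun x => s • r x) I I :=
      fun x hx => I.smul_mem s (hrI hx)
    rw [← ncard_fixedPoints_restrict _ (hrestrict a), ← ncard_fixedPoints_restrict _ (hrestrict b)]
    exact h.ncard_fixedPoints_eq (X := I) (r := hrI.restrict) fun s x => Subtype.ext (hr s x)
  have ha := Set.ncard_inter_add_ncard_sdiff_eq_ncard (fixedPoints fun x => a • r x) I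
  have hb := Set.ncard_inter_add_ncard_sdiff_eq_ncard (fixedPoints fun x => b • r x) I
  have hX := h.ncard_fixedPoints_eq hr
  lia

lemma CharEq.exists_intertwiner [Finite S] (h : CharEq a b) (hb : InMaxSubgroup e b) :
    ∃ x, JLe e x ∧ x * e = x ∧ a * x = x * b := by
  have he := hb.isIdempotentElem
  obtain ⟨-, hbe, c, -, hce, hbc, hcb⟩ := hb
  have hcard := h.ncard_fixedPoints_sdiff_eq (r := (· * c)) (I := idealNotJLe e)
    (fun s x => mul_assoc s x c) fun x hx hxc => hx hxc.of_mul_right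
  have heb : e ∈ (fixedPoints fun x => b • (x * c)) \ idealNotJLe e := by
    refine ⟨?_, not_not_intro (jLe_self he)⟩
    change b * (e * c) = e
    rw [← mul_assoc, hbe, hbc]
  obtain ⟨x, hx, hex⟩ := Set.nonempty_of_ncard_ne_zero
    (hcard.trans_ne (Set.ncard_ne_zero_of_mem heb))
  replace hx : a * (x * c) = x := hx
  have hxe : x * e = x := by rw [← hx, mul_assoc, mul_assoc, hce]
  have haxb : x * b = a * x :=
    calc x * b = a * (x * (c * b)) := by conv_lhs => rw [← hx, mul_assoc, mul_assoc]
      _ = a * x := by rw [hcb, hxe]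
  exact ⟨x, not_not.1 hex, hxe, haxb.symm⟩

end Actions

section Subgroups

variable {S : Type*} [Semigroup S] {a b e f x : S}

lemma InMaxSubgroup.mul_eq_of_intertwines (ha : InMaxSubgroup f a) (hb : InMaxSubgroup e b)
    (hxe : x * e = x) (hx : a * x = x * b) : f * x = x := by
  obtain ⟨-, -, c, -, -, hbc, -⟩ := hb
  have hax : x = a * x * c := by rw [hx, mul_assoc, hbc, hxe]
  rw [hax, ← mul_assoc, ← mul_assoc, ha.1]

lemma InMaxSubgroup.sgConj_of_charEq [Finite S] (ha : InMaxSubgroup f a) (hb : InMaxSubgroup e b)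
    (h : CharEq a b) : SgConj a b := by
  obtain ⟨x, hJx, hxe, hx⟩ := h.exists_intertwiner hb
  obtain ⟨x', hJx', hxf', hx'⟩ := h.symm.exists_intertwiner ha
  have hfx : f * x = x := ha.mul_eq_of_intertwines hb hxe hx
  have hex' : e * x' = x' := hb.mul_eq_of_intertwines ha hxf' hx'
  have hJfe : JLe f e := .of_mul_right (hex'.symm ▸ hJx')
  obtain ⟨y, hyx⟩ := hJx.exists_mul_eq' hb.isIdempotentElem hxe
  obtain ⟨z, hxz⟩ := (hJfe.trans hJx).exists_mul_eq ha.isIdempotentElem hfx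
  have hezx : e * (z * x) = e := by
    rw [← hyx, mul_assoc, ← mul_assoc x, hxz, hfx]
  have hab : x * (b * z) = a := by rw [← mul_assoc, ← hx, mul_assoc, hxz, ha.2.1]
  have hba : b * z * x = b :=
    calc b * z * x = b * (e * (z * x)) := by rw [← mul_assoc b, hb.2.1, mul_assoc]
      _ = b := by rw [hezx, hb.2.1]
  have hconj := primConj_mul_comm x (b * z)
  rw [hab, hba] at hconj
  exact .single hconj

end Subgroups

/-- Corollary 1 (statement 3): in a finite regular semigroup, `a ∼ b` iff
`a ≡ b`. -/
theorem conj_iff_charEq_of_finite_regular {S : Type*} [Semigroup S] [Finite S]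
    (hreg : Regular S) (a b : S) : SgConj a b ↔ CharEq a b := by
  refine ⟨SgConj.charEq, fun h => ?_⟩
  obtain ⟨f, hf⟩ := groupBound_of_finite a
  obtain ⟨e, he⟩ := groupBound_of_finite b
  have ha : SgConj a (a * f) := hreg.sgConj_mul_of_isEIdem hf
  have hb : SgConj b (b * e) := hreg.sgConj_mul_of_isEIdem he
  have hchar : CharEq (a * f) (b * e) := (ha.symm.charEq.trans h).trans hb.charEq
  have hgroup : SgConj (a * f) (b * e) :=
    hf.inMaxSubgroup_mul.sgConj_of_charEq he.inMaxSubgroup_mul hchar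
  exact (ha.trans hgroup).trans hb.symm

end SgConjPaper
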